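/- For every positive integer λ and every ε ∈ (0, 1/5], there exist constants C > 0 and y₀ > 0 (depending on a₁, a₂, λ, ε) such that for all y ≥ y₀ one has Σ_{n ≥ y, gcd(n,a₂)=1} ρ_λ(n)/φ(ℓ(n)) ≤ C·(log log y)/y^{1/(1+3λ)−ε}, where the sum is over positive integers n ≥ y coprime to a₂. -/

import Mathlib

open scoped BigOperators

/-- `gu u n = gcd(n, u n)`. -/
noncomputable def gu (u : ℕ → ℤ) (n : ℕ) : ℕ := Int.gcd (n : ℤ) (u n)

/-- Rank of appearance of `m` in the sequence `u`. -/
noncomputable def zu (u : ℕ → ℤ) (m : ℕ) : ℕ := sInf {n : ℕ | 0 < n ∧ (m : ℤ) ∣ u n}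

/-- `ℓ(m) = lcm(m, z_u(m))`. -/
noncomputable def ellu (u : ℕ → ℤ) (m : ℕ) : ℕ := Nat.lcm m (zu u m)

/-- The arithmetic function `ρ_λ`. -/
noncomputable def rho (lam n : ℕ) : ℝ :=
  (Nat.factorial lam : ℝ) *
    ∑ f ∈ (Fintype.piFinset fun _ : n.primeFactors => Finset.range (lam + 1)) |>.filter
        (fun f => ∑ p, f p = lam),
      ∏ p : n.primeFactors,
        (((n.factorization (p : ℕ) : ℝ) ^ f p - ((n.factorization (p : ℕ) : ℝ) - 1) ^ f p) *
          Real.log ((p : ℕ) : ℝ) ^ f p / (Nat.factorial (f p) : ℝ))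

/-- The set of primes `≤ x`. -/
noncomputable def primesUpTo (x : ℝ) : Finset ℕ :=
  (Finset.range (⌊x⌋₊ + 1)).filter Nat.Prime

/-- `π(x)`, the number of primes `≤ x`. -/
noncomputable def primePi (x : ℝ) : ℕ := (primesUpTo x).card

/-- `π(x; b, a)`, the number of primes `p ≤ x` with `p ≡ a (mod b)`. -/
noncomputable def primePiMod (x : ℝ) (b a : ℕ) : ℕ :=
  ((primesUpTo x).filter fun p => p % b = a % b).card

/-- `Δ(x; b, a) = π(x; b, a) - π(x)/φ(b)`. -/
noncomputable def chebErr (x : ℝ) (b a : ℕ) : ℝ :=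
  (primePiMod x b a : ℝ) - (primePi x : ℝ) / (Nat.totient b : ℝ)

lemma aux_card_divisors_bound (η : ℝ) (hη : 0 < η) :
    ∃ C : ℝ, 0 < C ∧ ∀ n : ℕ, n ≠ 0 → (n.divisors.card : ℝ) ≤ C * (n : ℝ) ^ η := by
  obtain ⟨N, hN⟩ : ∃ N : ℕ, (2 : ℝ) ^ (1 / η) ≤ N := exists_nat_ge _
  set δ : ℝ := (2 : ℝ) ^ η - 1 with hδ
  have hδ0 : 0 < δ := by
    have := Real.one_lt_rpow (by norm_num : (1 : ℝ) < 2) hη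
    linarith
  set K : ℝ := 1 + 1 / δ with hK
  have hK1 : 1 ≤ K := by
    have : 0 < 1 / δ := by positivity
    linarith
  refine ⟨K ^ (N + 1), by positivity, fun n hn => ?_⟩
  rw [Nat.card_divisors hn]
  have hfac : (n : ℝ) ^ η = ∏ x ∈ n.primeFactors, (((x : ℝ) ^ (n.factorization x)) ^ η) := by
    rw [Real.finsetProd_rpow _ _ (fun i _ => by positivity)]
    congr 1
    conv_lhs => rw [Nat.prod_primeFactors_pow_factorization hn]
    push_cast
    rfl
  have hstep : ∀ x ∈ n.primeFactors, ((n.factorization x + 1 : ℕ) : ℝ) ≤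
      (if x ≤ N then K else 1) * (((x : ℝ) ^ (n.factorization x)) ^ η) := by
    intro x hx
    have hxp := Nat.prime_of_mem_primeFactors hx
    have hx2 : (2 : ℝ) ≤ x := by exact_mod_cast hxp.two_le
    generalize n.factorization x = f
    have e1 : ((x : ℝ) ^ f) ^ η = ((x : ℝ) ^ η) ^ f := by
      rw [← Real.rpow_natCast, ← Real.rpow_natCast, ← Real.rpow_mul (by positivity),
        ← Real.rpow_mul (by positivity), mul_comm]
    rw [e1]
    push_cast
    split_ifs with h
    · have h1 : (1 + δ) ^ f ≤ ((x : ℝ) ^ η) ^ f := by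
        apply pow_le_pow_left₀ (by positivity)
        have := Real.rpow_le_rpow (by norm_num) hx2 hη.le
        linarith
      have h2 : 1 + (f : ℝ) * δ ≤ (1 + δ) ^ f := one_add_mul_le_pow (by linarith) f
      have h3 : (f : ℝ) + 1 ≤ K * (1 + f * δ) := by
        have : K * (1 + f * δ) = 1 + f + 1 / δ + f * δ := by
          rw [hK]; field_simp; ring
        have h4 : 0 ≤ 1 / δ := by positivity
        have h5 : 0 ≤ (f : ℝ) * δ := by positivity
        linarith
      calc (f : ℝ) + 1 ≤ K * (1 + f * δ) := h3
        _ ≤ _ := mul_le_mul_of_nonneg_left (h2.trans h1) (by linarith)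
    · have hxN : (2 : ℝ) ^ (1 / η) ≤ x := hN.trans (by exact_mod_cast (not_le.mp h).le)
      have h1 : (2 : ℝ) ≤ (x : ℝ) ^ η := by
        have := Real.rpow_le_rpow (by positivity) hxN hη.le
        rwa [← Real.rpow_mul (by norm_num), one_div, inv_mul_cancel₀ hη.ne', Real.rpow_one] at this
      have h2 : (2 : ℝ) ^ f ≤ ((x : ℝ) ^ η) ^ f := pow_le_pow_left₀ (by norm_num) h1 f
      have h3 : (f : ℝ) + 1 ≤ 2 ^ f := by exact_mod_cast Nat.lt_two_pow_self
      linarith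
  rw [hfac]
  push_cast at hstep ⊢
  calc ∏ x ∈ n.primeFactors, ((n.factorization x : ℝ) + 1)
      ≤ ∏ x ∈ n.primeFactors, ((if x ≤ N then K else 1) * (((x : ℝ) ^ (n.factorization x)) ^ η)) :=
        Finset.prod_le_prod (fun i _ => by positivity) hstep
    _ = (∏ x ∈ n.primeFactors, (if x ≤ N then K else 1)) *
          ∏ x ∈ n.primeFactors, (((x : ℝ) ^ (n.factorization x)) ^ η) := Finset.prod_mul_distrib
    _ ≤ _ := by
      apply mul_le_mul_of_nonneg_right _ (Finset.prod_nonneg fun i _ => by positivity)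
      rw [← Finset.prod_filter, Finset.prod_const]
      apply pow_le_pow_right₀ hK1
      calc _ ≤ (Finset.range (N + 1)).card := by
            apply Finset.card_le_card
            intro x hx
            simp only [Finset.mem_filter] at hx
            simp only [Finset.mem_range]; omega
        _ = _ := by simp

lemma aux_totient_bound (η : ℝ) (hη : 0 < η) :
    ∃ C : ℝ, 0 < C ∧ ∀ n : ℕ, n ≠ 0 → (1 / (n.totient : ℝ)) ≤ C * (n : ℝ) ^ (-(1 - η)) := by
  obtain ⟨C, hC, h⟩ := aux_card_divisors_bound η hη
  refine ⟨C, hC, fun n hn => ?_⟩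
  have h1 : n ≤ n.divisors.card * n.totient := by
    conv_lhs => rw [← Nat.sum_totient n]
    rw [← smul_eq_mul]
    apply Finset.sum_le_card_nsmul
    intro d hd
    exact Nat.le_of_dvd (Nat.totient_pos.2 (Nat.pos_of_ne_zero hn))
      (Nat.totient_dvd_of_dvd (Nat.dvd_of_mem_divisors hd))
  have h2 : (n : ℝ) ≤ n.divisors.card * n.totient := by exact_mod_cast h1
  have hn0 : (0 : ℝ) < n := by exact_mod_cast Nat.pos_of_ne_zero hn
  have ht : (0 : ℝ) < n.totient := by
    exact_mod_cast Nat.totient_pos.2 (Nat.pos_of_ne_zero hn)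
  have h3 : (n : ℝ) ^ (-(1 - η)) = (n : ℝ) ^ η / n := by
    rw [neg_sub, Real.rpow_sub_one hn0.ne']
  rw [h3, div_le_iff₀ ht, ← mul_div_assoc, div_mul_eq_mul_div, le_div_iff₀ hn0, one_mul]
  exact h2.trans (mul_le_mul_of_nonneg_right (h n hn) ht.le)

lemma aux_rho_nonneg (lam n : ℕ) : 0 ≤ rho lam n := by
  unfold rho
  refine mul_nonneg (by positivity) (Finset.sum_nonneg fun f _ => Finset.prod_nonneg fun p _ => ?_)
  have hp := Nat.prime_of_mem_primeFactors p.2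
  have hd := Nat.dvd_of_mem_primeFactors p.2
  have hn := (Nat.mem_primeFactors.mp p.2).2.2
  have h1 : 1 ≤ n.factorization (p : ℕ) := (hp.dvd_iff_one_le_factorization hn).1 hd
  have h1' : (1 : ℝ) ≤ n.factorization (p : ℕ) := by exact_mod_cast h1
  have hl : 0 ≤ Real.log ((p : ℕ) : ℝ) := Real.log_natCast_nonneg _
  have h2 : ((n.factorization (p : ℕ) : ℝ) - 1) ^ f p ≤ (n.factorization (p : ℕ) : ℝ) ^ f p :=
    pow_le_pow_left₀ (by linarith) (by linarith) _
  have h3 := sub_nonneg.2 h2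
  positivity

lemma aux_rho_card (lam n : ℕ) (h : rho lam n ≠ 0) : n.primeFactors.card ≤ lam := by
  unfold rho at h
  have h1 := right_ne_zero_of_mul h
  obtain ⟨f, hf, hne⟩ := Finset.exists_ne_zero_of_sum_ne_zero h1
  rw [Finset.prod_ne_zero_iff] at hne
  have h2 : ∀ p : n.primeFactors, 1 ≤ f p := by
    intro p
    by_contra hc
    have h0 : f p = 0 := by omega
    apply hne p (Finset.mem_univ _)
    simp [h0]
  have h3 := (Finset.mem_filter.1 hf).2
  calc n.primeFactors.card = ∑ p : n.primeFactors, 1 := by simp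
    _ ≤ ∑ p, f p := Finset.sum_le_sum fun p _ => h2 p
    _ = lam := h3

lemma aux_rho_le (lam n : ℕ) (hn : n ≠ 0) (hc : n.primeFactors.card ≤ lam) :
    rho lam n ≤ (Nat.factorial lam : ℝ) * ((lam + 1 : ℝ) ^ lam) * Real.log n ^ lam := by
  unfold rho
  rw [mul_assoc]
  apply mul_le_mul_of_nonneg_left _ (by positivity)
  have hL : 0 ≤ Real.log (n : ℝ) := Real.log_natCast_nonneg _
  refine (Finset.sum_le_card_nsmul _ _ (Real.log n ^ lam) ?_).trans ?_
  · intro f hf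
    have h3 := (Finset.mem_filter.1 hf).2
    conv_rhs => rw [← h3, ← Finset.prod_pow_eq_pow_sum]
    apply Finset.prod_le_prod
    · intro p _
      have hp := Nat.prime_of_mem_primeFactors p.2
      have hd := Nat.dvd_of_mem_primeFactors p.2
      have h1 : 1 ≤ n.factorization (p : ℕ) := (hp.dvd_iff_one_le_factorization hn).1 hd
      have h1' : (1 : ℝ) ≤ n.factorization (p : ℕ) := by exact_mod_cast h1
      have hl : 0 ≤ Real.log ((p : ℕ) : ℝ) := Real.log_natCast_nonneg _
      have h2 : ((n.factorization (p : ℕ) : ℝ) - 1) ^ f p ≤ (n.factorization (p : ℕ) : ℝ) ^ f p :=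
        pow_le_pow_left₀ (by linarith) (by linarith) _
      have h3 := sub_nonneg.2 h2
      positivity
    · intro p _
      have hp := Nat.prime_of_mem_primeFactors p.2
      have hd := Nat.dvd_of_mem_primeFactors p.2
      have h1 : 1 ≤ n.factorization (p : ℕ) := (hp.dvd_iff_one_le_factorization hn).1 hd
      have h1' : (1 : ℝ) ≤ n.factorization (p : ℕ) := by exact_mod_cast h1
      have hl : 0 ≤ Real.log ((p : ℕ) : ℝ) := Real.log_natCast_nonneg _
      have h4 : 0 ≤ ((n.factorization (p : ℕ) : ℝ) - 1) ^ f p := pow_nonneg (by linarith) _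
      have h5 : (1 : ℝ) ≤ (Nat.factorial (f p) : ℝ) := by
        exact_mod_cast Nat.one_le_iff_ne_zero.2 (Nat.factorial_ne_zero _)
      have h6 : (n.factorization (p : ℕ) : ℝ) * Real.log ((p : ℕ) : ℝ) ≤ Real.log n := by
        rw [← Real.log_pow]
        apply Real.log_le_log
        · have := hp.pos; positivity
        · exact_mod_cast Nat.ordProj_le _ hn
      rw [div_le_iff₀ (by linarith)]
      calc _ ≤ (n.factorization (p : ℕ) : ℝ) ^ f p * Real.log ((p : ℕ) : ℝ) ^ f p :=
            mul_le_mul_of_nonneg_right (by linarith) (by positivity)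
        _ = ((n.factorization (p : ℕ) : ℝ) * Real.log ((p : ℕ) : ℝ)) ^ f p := (mul_pow _ _ _).symm
        _ ≤ Real.log n ^ f p := pow_le_pow_left₀ (by positivity) h6 _
        _ ≤ Real.log n ^ f p * (Nat.factorial (f p) : ℝ) := le_mul_of_one_le_right (by positivity) h5
  · rw [nsmul_eq_mul]
    apply mul_le_mul_of_nonneg_right _ (by positivity)
    have : (lam + 1 : ℝ) ^ lam = ((lam + 1) ^ lam : ℕ) := by push_cast; rfl
    rw [this]
    norm_cast
    refine (Finset.card_filter_le _ _).trans ?_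
    rw [Fintype.card_piFinset]
    simp only [Finset.card_range, Finset.prod_const, Finset.card_univ, Fintype.card_coe]
    exact Nat.pow_le_pow_right (by omega) hc

lemma aux_rho_bound (lam : ℕ) (hlam : 0 < lam) (η : ℝ) (hη : 0 < η) :
    ∃ C : ℝ, 0 < C ∧ ∀ n : ℕ, n ≠ 0 → rho lam n ≤ C * (n : ℝ) ^ η := by
  have hl : (0 : ℝ) < lam := by exact_mod_cast hlam
  refine ⟨(Nat.factorial lam : ℝ) * ((lam + 1 : ℝ) ^ lam) * (1 / (η / lam)) ^ lam,
    by positivity, fun n hn => ?_⟩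
  by_cases h0 : rho lam n = 0
  · rw [h0]; positivity
  refine (aux_rho_le lam n hn (aux_rho_card lam n h0)).trans ?_
  rw [mul_assoc (_ * _)]
  apply mul_le_mul_of_nonneg_left _ (by positivity)
  have h1 := Real.log_le_rpow_div (Nat.cast_nonneg n : (0 : ℝ) ≤ n) (by positivity : 0 < η / lam)
  have hL : 0 ≤ Real.log (n : ℝ) := Real.log_natCast_nonneg _
  calc Real.log n ^ lam ≤ ((n : ℝ) ^ (η / lam) / (η / lam)) ^ lam := pow_le_pow_left₀ hL h1 _
    _ = (1 / (η / lam)) ^ lam * ((n : ℝ) ^ (η / lam)) ^ lam := by rw [← mul_pow]; congr 1; ring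
    _ = _ := by
      congr 1
      rw [← Real.rpow_natCast, ← Real.rpow_mul (by positivity)]
      congr 1
      field_simp

lemma aux_binet {K : Type*} [Field K] (a₁ a₂ : ℤ) (u : ℕ → ℤ) (hu0 : u 0 = 0) (hu1 : u 1 = 1)
    (hrec : ∀ n : ℕ, u (n + 2) = a₁ * u (n + 1) + a₂ * u n) (α β : K)
    (hα : α ^ 2 = (a₁ : K) * α + (a₂ : K)) (hβ : β ^ 2 = (a₁ : K) * β + (a₂ : K)) (n : ℕ) :
    (u n : K) * (α - β) = α ^ n - β ^ n := by
  induction n using Nat.twoStepInduction with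
  | zero => simp [hu0]
  | one => simp [hu1]
  | more n h1 h2 =>
    rw [hrec]
    push_cast
    have e1 : α ^ (n + 2) = (a₁ : K) * α ^ (n + 1) + a₂ * α ^ n := by
      rw [pow_add, hα]; ring
    have e2 : β ^ (n + 2) = (a₁ : K) * β ^ (n + 1) + a₂ * β ^ n := by
      rw [pow_add, hβ]; ring
    rw [e1, e2]
    linear_combination (a₁ : K) * h2 + (a₂ : K) * h1

lemma aux_u_ne_zero (a₁ a₂ : ℤ) (ha₂ : a₂ ≠ 0) (hΔ : a₁ ^ 2 + 4 * a₂ ≠ 0)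
    (u : ℕ → ℤ) (hu0 : u 0 = 0) (hu1 : u 1 = 1)
    (hrec : ∀ n : ℕ, u (n + 2) = a₁ * u (n + 1) + a₂ * u n)
    (hnd : ∀ α β : ℂ, α ^ 2 = (a₁ : ℂ) * α + (a₂ : ℂ) →
      β ^ 2 = (a₁ : ℂ) * β + (a₂ : ℂ) → α ≠ β → ∀ k : ℕ, 0 < k → (α / β) ^ k ≠ 1)
    (k : ℕ) (hk : 0 < k) : u k ≠ 0 := by
  obtain ⟨r, hr⟩ := IsAlgClosed.exists_eq_mul_self ((a₁ : ℂ) ^ 2 + 4 * a₂)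
  have hΔ' : (a₁ : ℂ) ^ 2 + 4 * a₂ ≠ 0 := by exact_mod_cast hΔ
  have hr0 : r ≠ 0 := by
    rintro rfl
    apply hΔ'; rw [hr]; ring
  have hα : (((a₁ : ℂ) + r) / 2) ^ 2 = (a₁ : ℂ) * (((a₁ : ℂ) + r) / 2) + a₂ := by
    linear_combination (-1 / 4 : ℂ) * hr
  have hβ : (((a₁ : ℂ) - r) / 2) ^ 2 = (a₁ : ℂ) * (((a₁ : ℂ) - r) / 2) + a₂ := by
    linear_combination (-1 / 4 : ℂ) * hr
  have hne : ((a₁ : ℂ) + r) / 2 ≠ ((a₁ : ℂ) - r) / 2 := by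
    intro h
    apply hr0
    linear_combination h
  have hb := aux_binet a₁ a₂ u hu0 hu1 hrec _ _ hα hβ k
  intro h0
  apply hnd _ _ hα hβ hne k hk
  rw [h0] at hb
  have hβ0 : ((a₁ : ℂ) - r) / 2 ≠ 0 := by
    intro h
    rw [h] at hβ
    apply ha₂
    have : (a₂ : ℂ) = 0 := by simpa using hβ.symm
    exact_mod_cast this
  rw [div_pow, div_eq_one_iff_eq (pow_ne_zero _ hβ0)]
  simp only [Int.cast_zero, zero_mul] at hb
  exact (sub_eq_zero.1 hb.symm)

lemma aux_rank (a₁ a₂ : ℤ)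
    (u : ℕ → ℤ) (hu0 : u 0 = 0) (hu1 : u 1 = 1)
    (hrec : ∀ n : ℕ, u (n + 2) = a₁ * u (n + 1) + a₂ * u n) (p : ℕ) (hp : p.Prime)
    (hD : ¬ (p : ℤ) ∣ a₂ * (a₁ ^ 2 + 4 * a₂)) :
    ∃ z : ℕ, 0 < z ∧ p.Coprime z ∧ (p : ℤ) ∣ u z ∧ ∀ m, (p : ℤ) ∣ u m → z ∣ m := by
  have : Fact p.Prime := ⟨hp⟩
  let f : Polynomial (ZMod p) := Polynomial.X ^ 2 - Polynomial.C (a₁ : ZMod p) * Polynomial.X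
    - Polynomial.C (a₂ : ZMod p)
  have hfd : f.degree = 2 := by
    have : f = Polynomial.C 1 * Polynomial.X ^ 2 + Polynomial.C (-(a₁ : ZMod p)) * Polynomial.X
      + Polynomial.C (-(a₂ : ZMod p)) := by
      simp only [f, Polynomial.C_neg, Polynomial.C_1]; ring
    rw [this]
    exact Polynomial.degree_quadratic one_ne_zero
  let K := f.SplittingField
  have : Finite K := Module.finite_of_finite (ZMod p)
  have : CharP K p := charP_of_injective_algebraMap (algebraMap (ZMod p) K).injective p
  have : Fintype K := Fintype.ofFinite K
  have hspl := Polynomial.SplittingField.splits f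
  obtain ⟨α, hα⟩ := Polynomial.Splits.exists_eval_eq_zero hspl
    (by rw [Polynomial.degree_map, hfd]; norm_num)
  have hα : α ^ 2 = (a₁ : K) * α + (a₂ : K) := by
    rw [Polynomial.eval_map] at hα
    simp only [f, Polynomial.eval₂_sub, Polynomial.eval₂_mul, Polynomial.eval₂_pow,
      Polynomial.eval₂_X, Polynomial.eval₂_C] at hα
    simp only [map_intCast] at hα
    linear_combination hα
  set β : K := a₁ - α with hβd
  have hβ : β ^ 2 = (a₁ : K) * β + (a₂ : K) := by
    rw [hβd]; linear_combination hα
  have hzero : ∀ m : ℤ, (m : K) = 0 ↔ (p : ℤ) ∣ m := fun m => CharP.intCast_eq_zero_iff K p m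
  have hDK : (a₂ : K) * ((a₁ : K) ^ 2 + 4 * a₂) ≠ 0 := by
    intro h
    apply hD
    rw [← hzero]
    push_cast
    exact h
  have hne : α - β ≠ 0 := by
    intro h
    apply right_ne_zero_of_mul hDK
    have : (α - β) ^ 2 = (a₁ : K) ^ 2 + 4 * a₂ := by
      rw [hβd]; linear_combination 4 * hα
    rw [← this, h]; ring
  have hprod : α * β = -a₂ := by rw [hβd]; linear_combination -hα
  have hα0 : α ≠ 0 := by
    intro h
    apply left_ne_zero_of_mul hDK
    rw [h] at hprod
    linear_combination hprod
  have hβ0 : β ≠ 0 := by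
    intro h
    apply left_ne_zero_of_mul hDK
    rw [h] at hprod
    linear_combination hprod
  have key : ∀ m, (p : ℤ) ∣ u m ↔ (α / β) ^ m = 1 := by
    intro m
    have hb := aux_binet a₁ a₂ u hu0 hu1 hrec _ _ hα hβ m
    rw [← hzero, div_pow, div_eq_one_iff_eq (pow_ne_zero _ hβ0)]
    constructor
    · intro h
      rw [h, zero_mul] at hb
      exact sub_eq_zero.1 hb.symm
    · intro h
      rw [h, sub_self] at hb
      exact (mul_eq_zero.1 hb).resolve_right hne
  have hpos : 0 < orderOf (α / β) := by
    rw [orderOf_pos_iff, isOfFinOrder_iff_pow_eq_one]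
    exact ⟨Fintype.card K - 1, by have := Fintype.one_lt_card (α := K); omega,
      FiniteField.pow_card_sub_one_eq_one _ (div_ne_zero hα0 hβ0)⟩
  refine ⟨orderOf (α / β), hpos, ?_, (key _).2 (pow_orderOf_eq_one _),
    fun m hm => orderOf_dvd_of_pow_eq_one ((key m).1 hm)⟩
  rw [hp.coprime_iff_not_dvd]
  rintro ⟨k, hk⟩
  have h1 := pow_orderOf_eq_one (α / β)
  rw [hk, mul_comm, pow_mul] at h1
  have h2 : (α / β) ^ k = 1 := by
    have : ((α / β) ^ k - 1) ^ p = 0 := by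
      rw [sub_pow_char, h1, one_pow, sub_self]
    exact sub_eq_zero.1 (pow_eq_zero_iff hp.ne_zero |>.1 this)
  have h3 := orderOf_dvd_of_pow_eq_one h2
  have hk0 : 0 < k := by
    rcases Nat.eq_zero_or_pos k with h | h
    · rw [h] at hk; omega
    · exact h
  have h4 := Nat.le_of_dvd hk0 h3
  have := hp.two_le
  nlinarith

lemma aux_card_primeFactors (N : ℕ) (hN : N ≠ 0) : 2 ^ N.primeFactors.card ≤ N := by
  calc 2 ^ N.primeFactors.card ≤ ∏ p ∈ N.primeFactors, p :=
        Finset.pow_card_le_prod _ _ _ fun p hp => (Nat.prime_of_mem_primeFactors hp).two_le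
    _ ≤ N := Nat.le_of_dvd (Nat.pos_of_ne_zero hN) (Nat.prod_primeFactors_dvd N)

lemma aux_u_le (a₁ a₂ : ℤ)
    (u : ℕ → ℤ) (hu0 : u 0 = 0) (hu1 : u 1 = 1)
    (hrec : ∀ n : ℕ, u (n + 2) = a₁ * u (n + 1) + a₂ * u n) (n : ℕ) :
    (u n).natAbs ≤ (a₁.natAbs + a₂.natAbs + 1) ^ n := by
  induction n using Nat.twoStepInduction with
  | zero => simp [hu0]
  | one => simp [hu1]
  | more n h1 h2 =>
    rw [hrec]
    set B := a₁.natAbs + a₂.natAbs + 1 with hB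
    have hB1 : B ^ n ≤ B ^ (n + 1) := Nat.pow_le_pow_right (by omega) (by omega)
    calc (a₁ * u (n + 1) + a₂ * u n).natAbs ≤ (a₁ * u (n + 1)).natAbs + (a₂ * u n).natAbs :=
          Int.natAbs_add_le _ _
      _ = a₁.natAbs * (u (n + 1)).natAbs + a₂.natAbs * (u n).natAbs := by
          rw [Int.natAbs_mul, Int.natAbs_mul]
      _ ≤ a₁.natAbs * B ^ (n + 1) + a₂.natAbs * B ^ (n + 1) := by
          exact Nat.add_le_add (Nat.mul_le_mul_left _ h2) (Nat.mul_le_mul_left _ (h1.trans hB1))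
      _ ≤ B ^ (n + 2) := by
          rw [← add_mul, pow_succ _ (n + 1), mul_comm]
          exact Nat.mul_le_mul_left _ (by omega)

/-- The rank function, together with all facts about it that are needed. -/
lemma aux_rank_fun (a₁ a₂ : ℤ) (ha₂ : a₂ ≠ 0) (hΔ : a₁ ^ 2 + 4 * a₂ ≠ 0)
    (u : ℕ → ℤ) (hu0 : u 0 = 0) (hu1 : u 1 = 1)
    (hrec : ∀ n : ℕ, u (n + 2) = a₁ * u (n + 1) + a₂ * u n)
    (hnd : ∀ α β : ℂ, α ^ 2 = (a₁ : ℂ) * α + (a₂ : ℂ) →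
      β ^ 2 = (a₁ : ℂ) * β + (a₂ : ℂ) → α ≠ β → ∀ k : ℕ, 0 < k → (α / β) ^ k ≠ 1) :
    ∃ z : ℕ → ℕ, ∃ S : ℕ → Finset ℕ, ∃ K : ℕ, (∀ p, 0 < z p) ∧
      (∀ p : ℕ, p.Prime → p.Coprime (z p)) ∧
      (∀ p n : ℕ, p.Prime → p ∣ n → zu u n ≠ 0 → z p ∣ zu u n) ∧
      (∀ p : ℕ, p.Prime → p ∈ S (z p)) ∧ ∀ t, 0 < t → (S t).card ≤ K * t := by
  classical
  set D : ℤ := a₂ * (a₁ ^ 2 + 4 * a₂) with hD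
  have hD0 : D ≠ 0 := mul_ne_zero ha₂ hΔ
  have hex : ∀ p : ℕ, ∃ z : ℕ, 0 < z ∧ (p.Prime → p.Coprime z ∧
      ((p : ℤ) ∣ u z * D) ∧ ∀ m, (p : ℤ) ∣ u m → z ∣ m) := by
    intro p
    by_cases hp : p.Prime
    · by_cases hpD : (p : ℤ) ∣ D
      · exact ⟨1, one_pos, fun _ => ⟨Nat.coprime_one_right _, hpD.mul_left _, fun m _ => one_dvd _⟩⟩
      · obtain ⟨z, h1, h2, h3, h4⟩ := aux_rank a₁ a₂ u hu0 hu1 hrec p hp hpD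
        exact ⟨z, h1, fun _ => ⟨h2, h3.mul_right _, h4⟩⟩
    · exact ⟨1, one_pos, fun h => absurd h hp⟩
  choose z hz0 hz using hex
  refine ⟨z, fun t => (u t * D).natAbs.primeFactors,
    a₁.natAbs + a₂.natAbs + 1 + D.natAbs, hz0, fun p hp => (hz p hp).1, ?_, ?_, ?_⟩
  · intro p n hp hpn hn
    apply (hz p hp).2.2
    have hmem : zu u n ∈ {k : ℕ | 0 < k ∧ (n : ℤ) ∣ u k} := by
      apply Nat.sInf_mem
      by_contra hc
      rw [Set.not_nonempty_iff_eq_empty] at hc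
      apply hn
      unfold zu
      rw [hc, Nat.sInf_empty]
    exact (Int.natCast_dvd_natCast.2 hpn).trans hmem.2
  · intro p hp
    rw [Nat.mem_primeFactors]
    refine ⟨hp, Int.natCast_dvd.1 (hz p hp).2.1, ?_⟩
    rw [Int.natAbs_ne_zero]
    exact mul_ne_zero (aux_u_ne_zero a₁ a₂ ha₂ hΔ u hu0 hu1 hrec hnd _ (hz0 p)) hD0
  · intro t ht
    have hne : (u t * D).natAbs ≠ 0 := by
      rw [Int.natAbs_ne_zero]
      exact mul_ne_zero (aux_u_ne_zero a₁ a₂ ha₂ hΔ u hu0 hu1 hrec hnd _ ht) hD0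
    have h1 := aux_card_primeFactors _ hne
    have h2 : (u t * D).natAbs ≤ 2 ^ ((a₁.natAbs + a₂.natAbs + 1 + D.natAbs) * t) := by
      rw [Int.natAbs_mul]
      calc (u t).natAbs * D.natAbs ≤ (a₁.natAbs + a₂.natAbs + 1) ^ t * 2 ^ D.natAbs :=
            Nat.mul_le_mul (aux_u_le a₁ a₂ u hu0 hu1 hrec t) Nat.lt_two_pow_self.le
        _ ≤ (2 ^ (a₁.natAbs + a₂.natAbs + 1)) ^ t * (2 ^ D.natAbs) ^ t := by
            apply Nat.mul_le_mul
            · exact Nat.pow_le_pow_left Nat.lt_two_pow_self.le _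
            · exact Nat.le_self_pow ht.ne' _
        _ = _ := by rw [← pow_mul, ← pow_mul, ← pow_add, ← add_mul]
    exact (Nat.pow_le_pow_iff_right (by norm_num)).1 (h1.trans h2)

/-- The weight `n ^ (-s)` as an extended nonnegative real. -/
noncomputable def auxW (s : ℝ) (n : ℕ) : ENNReal := ENNReal.ofReal ((n : ℝ) ^ (-s))

lemma auxW_mul (s : ℝ) (m n : ℕ) : auxW s (m * n) = auxW s m * auxW s n := by
  unfold auxW
  rw [← ENNReal.ofReal_mul (by positivity), Nat.cast_mul,
    Real.mul_rpow (by positivity) (by positivity)]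

lemma auxW_one (s : ℝ) : auxW s 1 = 1 := by simp [auxW]

lemma auxW_pow (s : ℝ) (m k : ℕ) : auxW s (m ^ k) = auxW s m ^ k := by
  induction k with
  | zero => simp [auxW_one]
  | succ k ih => rw [pow_succ, auxW_mul, ih, pow_succ]

lemma aux_cover {X : Type*} (ψ : X → ℕ) (f : ℕ → ENNReal) (g : X → ENNReal)
    (h : ∀ m, f m ≠ 0 → ∃ x, ψ x = m ∧ f m ≤ g x) : ∑' m, f m ≤ ∑' x, g x := by
  rw [← tsum_subtype_support f]
  have h' : ∀ m : Function.support f, ∃ x, ψ x = m ∧ f m ≤ g x := fun m => h m m.2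
  choose φ h1 h2 using h'
  have hinj : Function.Injective φ := by
    intro a b hab
    apply Subtype.ext
    rw [← h1 a, ← h1 b, hab]
  exact (ENNReal.tsum_le_tsum h2).trans (ENNReal.tsum_comp_le_tsum_of_injective hinj g)

lemma aux_geom (s : ℝ) (hs : 0 < s) : ∃ C : ENNReal, C ≠ ⊤ ∧ ∀ q : ℕ, 2 ≤ q →
    ∑' k : ℕ, auxW s (q ^ (k + 1)) ≤ C * auxW s q := by
  have h2 : auxW s 2 < 1 := by
    unfold auxW
    rw [ENNReal.ofReal_lt_one]
    exact Real.rpow_lt_one_of_one_lt_of_neg (by norm_num) (by linarith)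
  refine ⟨(1 - auxW s 2)⁻¹, ?_, ?_⟩
  · rw [ENNReal.inv_ne_top]
    exact (tsub_pos_of_lt h2).ne'
  · intro q hq
    have hle : auxW s q ≤ auxW s 2 := by
      unfold auxW
      apply ENNReal.ofReal_le_ofReal
      apply Real.rpow_le_rpow_of_nonpos (by norm_num) (by exact_mod_cast hq) (by linarith)
    calc ∑' k : ℕ, auxW s (q ^ (k + 1)) = ∑' k : ℕ, auxW s q ^ k * auxW s q := by
          apply tsum_congr; intro k; rw [auxW_pow, pow_succ]
      _ = (1 - auxW s q)⁻¹ * auxW s q := by rw [ENNReal.tsum_mul_right, ENNReal.tsum_geometric]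
      _ ≤ _ := by gcongr

lemma aux_primesum (s κ : ℝ) (hκ : 0 ≤ κ) (hsκ : 1 < s + κ) : ∃ C : ENNReal, C ≠ ⊤ ∧ ∀ P : ℕ,
    ∑' q : ℕ, (if q.Prime ∧ q ≤ P then auxW s q else 0) ≤ C * ENNReal.ofReal ((P : ℝ) ^ κ) := by
  refine ⟨∑' q : ℕ, auxW (s + κ) q, ?_, ?_⟩
  · unfold auxW
    apply Summable.tsum_ofReal_ne_top
    rw [Real.summable_nat_rpow]
    linarith
  · intro P
    rw [← ENNReal.tsum_mul_right]
    apply ENNReal.tsum_le_tsum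
    intro q
    split_ifs with h
    · unfold auxW
      rw [← ENNReal.ofReal_mul (by positivity)]
      apply ENNReal.ofReal_le_ofReal
      have hq : (0 : ℝ) < q := by exact_mod_cast h.1.pos
      have h1 : (q : ℝ) ^ κ ≤ (P : ℝ) ^ κ :=
        Real.rpow_le_rpow hq.le (by exact_mod_cast h.2) hκ
      calc (q : ℝ) ^ (-s) = (q : ℝ) ^ (-(s + κ)) * (q : ℝ) ^ κ := by
            rw [← Real.rpow_add hq]; congr 1; ring
        _ ≤ _ := mul_le_mul_of_nonneg_left h1 (by positivity)
    · exact zero_le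

/-- Numbers with at most `j` prime factors, all at most `P`. -/
def auxM (j P m : ℕ) : Prop := m ≠ 0 ∧ m.primeFactors.card ≤ j ∧ ∀ q ∈ m.primeFactors, q ≤ P

/-- Splitting off a prime. -/
lemma aux_split (j P n q : ℕ) (hn : n ≠ 0) (hq : q ∈ n.primeFactors)
    (hc : n.primeFactors.card ≤ j + 1) (hP : ∀ q ∈ n.primeFactors, q ≤ P) :
    ∃ k m, q ^ (k + 1) * m = n ∧ q.Coprime m ∧ auxM j P m := by
  have hqp := Nat.prime_of_mem_primeFactors hq
  have hd := Nat.dvd_of_mem_primeFactors hq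
  have h1 : 1 ≤ n.factorization q := (hqp.dvd_iff_one_le_factorization hn).1 hd
  have hm0 : n / q ^ n.factorization q ≠ 0 := (Nat.ordCompl_pos q hn).ne'
  have hsub : (n / q ^ n.factorization q).primeFactors ⊆ n.primeFactors.erase q := by
    intro r hr
    rw [Finset.mem_erase]
    refine ⟨?_, Nat.primeFactors_mono (Nat.ordCompl_dvd n q) hn hr⟩
    rintro rfl
    exact Nat.not_dvd_ordCompl hqp hn (Nat.dvd_of_mem_primeFactors hr)
  refine ⟨n.factorization q - 1, n / q ^ n.factorization q, ?_, Nat.coprime_ordCompl hqp hn,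
    hm0, ?_, ?_⟩
  · rw [Nat.sub_add_cancel h1]
    exact Nat.ordProj_mul_ordCompl_eq_self n q
  · have := Finset.card_le_card hsub
    rw [Finset.card_erase_of_mem hq] at this
    omega
  · intro r hr
    exact hP r (Finset.mem_of_mem_erase (hsub hr))

open Classical in
lemma aux_Msum (s κ : ℝ) (hs : 0 < s) (hκ : 0 ≤ κ) (hsκ : 1 < s + κ) :
    ∃ C : ENNReal, C ≠ ⊤ ∧ ∀ P : ℕ, 1 ≤ P → ∀ j,
    ∑' m : ℕ, (if auxM j P m then auxW s m else 0) ≤ (C * ENNReal.ofReal ((P : ℝ) ^ κ)) ^ j := by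
  obtain ⟨C₁, hC₁, h1⟩ := aux_geom s hs
  obtain ⟨C₂, hC₂, h2⟩ := aux_primesum s κ hκ hsκ
  refine ⟨1 + C₁ * C₂, by finiteness, fun P hP j => ?_⟩
  have hPκ : 1 ≤ ENNReal.ofReal ((P : ℝ) ^ κ) := by
    rw [ENNReal.one_le_ofReal]
    exact Real.one_le_rpow (by exact_mod_cast hP) hκ
  set R := ENNReal.ofReal ((P : ℝ) ^ κ) with hR
  have hone : ∑' m : ℕ, (if m = 1 then (1 : ENNReal) else 0) = 1 := by
    rw [tsum_ite_eq]
  induction j with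
  | zero =>
    rw [pow_zero, ← hone]
    apply ENNReal.tsum_le_tsum
    intro m
    split_ifs with h h' h'
    · rw [h', auxW_one]
    · exfalso
      obtain ⟨hm0, hc, -⟩ := h
      rw [Nat.le_zero, Finset.card_eq_zero, Nat.primeFactors_eq_empty] at hc
      omega
    · exact zero_le
    · exact le_rfl
  | succ j ih =>
    have hB : 1 ≤ (1 + C₁ * C₂) * R := by
      calc (1 : ENNReal) = 1 * 1 := (one_mul 1).symm
        _ ≤ _ := mul_le_mul' le_self_add hPκ
    have hcov : ∑' m : ℕ, (if auxM (j + 1) P m ∧ m ≠ 1 then auxW s m else 0) ≤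
        ∑' x : ℕ × ℕ × ℕ, (if x.1.Prime ∧ x.1 ≤ P then auxW s (x.1 ^ (x.2.1 + 1)) else 0) *
          (if auxM j P x.2.2 then auxW s x.2.2 else 0) := by
      apply aux_cover (fun x => x.1 ^ (x.2.1 + 1) * x.2.2)
      intro m hm
      rw [ne_eq, ite_eq_right_iff, Classical.not_imp] at hm
      obtain ⟨⟨⟨hm0, hc, hPm⟩, hm1⟩, -⟩ := hm
      have hqm : m.minFac ∈ m.primeFactors :=
        Nat.mem_primeFactors.2 ⟨Nat.minFac_prime hm1, Nat.minFac_dvd m, hm0⟩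
      obtain ⟨k, m', e, -, hM⟩ := aux_split j P m m.minFac hm0 hqm hc hPm
      refine ⟨(m.minFac, k, m'), e, ?_⟩
      rw [if_pos ⟨⟨hm0, hc, hPm⟩, hm1⟩, if_pos ⟨Nat.minFac_prime hm1, hPm _ hqm⟩, if_pos hM,
        ← auxW_mul, e]
    have hprod : ∑' x : ℕ × ℕ × ℕ, (if x.1.Prime ∧ x.1 ≤ P then auxW s (x.1 ^ (x.2.1 + 1)) else 0) *
          (if auxM j P x.2.2 then auxW s x.2.2 else 0) ≤
          (C₁ * C₂) * R * ((1 + C₁ * C₂) * R) ^ j := by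
      rw [ENNReal.tsum_prod']
      calc _ ≤ ∑' q : ℕ, (C₁ * (if q.Prime ∧ q ≤ P then auxW s q else 0)) *
            ((1 + C₁ * C₂) * R) ^ j := by
            apply ENNReal.tsum_le_tsum
            intro q
            rw [ENNReal.tsum_prod']
            simp only [ENNReal.tsum_mul_left]
            rw [ENNReal.tsum_mul_right]
            apply mul_le_mul' _ ih
            split_ifs with h
            · exact h1 q h.1.two_le
            · simp
        _ ≤ _ := by
            rw [ENNReal.tsum_mul_right, ENNReal.tsum_mul_left, mul_assoc C₁ C₂ R]
            gcongr
            exact h2 P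
    calc ∑' m : ℕ, (if auxM (j + 1) P m then auxW s m else 0)
        ≤ ∑' m : ℕ, ((if m = 1 then (1 : ENNReal) else 0) +
            (if auxM (j + 1) P m ∧ m ≠ 1 then auxW s m else 0)) := by
          apply ENNReal.tsum_le_tsum
          intro m
          by_cases hm : m = 1
          · subst hm
            rw [auxW_one]
            by_cases hM : auxM (j + 1) P 1 <;> simp [hM]
          · by_cases hM : auxM (j + 1) P m <;> simp [hm, hM]
      _ ≤ 1 + (C₁ * C₂) * R * ((1 + C₁ * C₂) * R) ^ j := by
          rw [ENNReal.tsum_add, hone]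
          gcongr
          exact hcov.trans hprod
      _ ≤ R * ((1 + C₁ * C₂) * R) ^ j + (C₁ * C₂) * R * ((1 + C₁ * C₂) * R) ^ j := by
          gcongr
          calc (1 : ENNReal) = 1 * 1 := (one_mul 1).symm
            _ ≤ _ := mul_le_mul' hPκ (one_le_pow₀ hB)
      _ = _ := by ring

/-- The final sum over primes. -/
lemma aux_Psum (z : ℕ → ℕ) (S : ℕ → Finset ℕ) (K : ℕ) (hz0 : ∀ p, 0 < z p)
    (hS : ∀ p : ℕ, p.Prime → p ∈ S (z p)) (hK : ∀ t, 0 < t → (S t).card ≤ K * t)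
    (lam : ℕ) (κ : ℝ) (hκ0 : 0 ≤ κ) (hκ : κ * (1 + 3 * lam) < 1) :
    ∑' p : ℕ, (if p.Prime then auxW (1 - κ * lam) p * auxW (1 - κ) (z p) else 0) ≠ ⊤ := by
  set a : ℝ := (1 - κ * lam) + (1 - κ) / 3 with ha
  set b : ℝ := 3 * (1 - κ * lam) + (1 - κ) with hb
  have ha1 : 1 < a := by rw [ha]; linarith
  have hb1 : 3 < b := by rw [hb]; linarith
  have hl : (0 : ℝ) ≤ lam := by positivity
  have hκl : 0 ≤ κ * lam := by positivity
  have hpt : ∀ p : ℕ, (if p.Prime then auxW (1 - κ * lam) p * auxW (1 - κ) (z p) else 0) ≤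
      auxW a p + (if p.Prime then auxW b (z p) else 0) := by
    intro p
    split_ifs with hp
    · have hp0 : (0 : ℝ) < p := by exact_mod_cast hp.pos
      have hz : (0 : ℝ) < z p := by exact_mod_cast hz0 p
      unfold auxW
      rw [← ENNReal.ofReal_mul (by positivity)]
      rcases le_total (p : ℝ) ((z p : ℝ) ^ (3 : ℝ)) with h | h
      · refine le_trans (ENNReal.ofReal_le_ofReal ?_) le_self_add
        have h1 : (z p : ℝ) ^ (-(1 - κ)) ≤ (p : ℝ) ^ (-((1 - κ) / 3)) := by
          calc (z p : ℝ) ^ (-(1 - κ)) = ((z p : ℝ) ^ (3 : ℝ)) ^ (-((1 - κ) / 3)) := by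
                rw [← Real.rpow_mul hz.le]; congr 1; ring
            _ ≤ _ := Real.rpow_le_rpow_of_nonpos hp0 h (by nlinarith)
        calc _ ≤ (p : ℝ) ^ (-(1 - κ * lam)) * (p : ℝ) ^ (-((1 - κ) / 3)) :=
              mul_le_mul_of_nonneg_left h1 (by positivity)
          _ = _ := by rw [← Real.rpow_add hp0]; congr 1; rw [ha]; ring
      · refine le_trans (ENNReal.ofReal_le_ofReal ?_) le_add_self
        have h1 : (p : ℝ) ^ (-(1 - κ * lam)) ≤ (z p : ℝ) ^ (-(3 * (1 - κ * lam))) := by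
          calc (p : ℝ) ^ (-(1 - κ * lam)) ≤ ((z p : ℝ) ^ (3 : ℝ)) ^ (-(1 - κ * lam)) :=
                Real.rpow_le_rpow_of_nonpos (by positivity) h (by nlinarith)
            _ = _ := by rw [← Real.rpow_mul hz.le]; congr 1; ring
        calc _ ≤ (z p : ℝ) ^ (-(3 * (1 - κ * lam))) * (z p : ℝ) ^ (-(1 - κ)) :=
              mul_le_mul_of_nonneg_right h1 (by positivity)
          _ = _ := by rw [← Real.rpow_add hz]; congr 1; rw [hb]; ring
    · exact zero_le
  refine ne_top_of_le_ne_top ?_ (ENNReal.tsum_le_tsum hpt)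
  rw [ENNReal.tsum_add]
  apply ENNReal.add_ne_top.2 ⟨?_, ?_⟩
  · unfold auxW
    apply Summable.tsum_ofReal_ne_top
    rw [Real.summable_nat_rpow]
    linarith
  · have h1 : ∑' p : ℕ, (if p.Prime then auxW b (z p) else 0) ≤
        ∑' x : ℕ × ℕ, (if 0 < x.1 ∧ x.2 ∈ S x.1 then auxW b x.1 else 0) := by
      apply aux_cover (fun x => x.2)
      intro p hp
      rw [ne_eq, ite_eq_right_iff, Classical.not_imp] at hp
      refine ⟨(z p, p), rfl, ?_⟩
      rw [if_pos hp.1, if_pos ⟨hz0 p, hS p hp.1⟩]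
    refine ne_top_of_le_ne_top ?_ h1
    rw [ENNReal.tsum_prod']
    have h2 : ∀ t : ℕ, ∑' p : ℕ, (if 0 < t ∧ p ∈ S t then auxW b t else 0) ≤
        (K : ENNReal) * auxW (b - 1) t := by
      intro t
      by_cases ht : 0 < t
      · have e : ∀ p, (if 0 < t ∧ p ∈ S t then auxW b t else 0) =
            if p ∈ S t then auxW b t else 0 := by intro p; simp [ht]
        simp only [e]
        rw [tsum_eq_sum (s := S t) (fun p hp => by simp [hp]), Finset.sum_ite_mem,
          Finset.inter_self, Finset.sum_const, nsmul_eq_mul]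
        have e2 : auxW (b - 1) t = t * auxW b t := by
          unfold auxW
          have ht' : (0 : ℝ) < t := by exact_mod_cast ht
          rw [← ENNReal.ofReal_natCast t, ← ENNReal.ofReal_mul (by positivity)]
          congr 1
          rw [show -(b - 1) = 1 + -b by ring, Real.rpow_add ht', Real.rpow_one]
        rw [e2, ← mul_assoc]
        gcongr
        exact_mod_cast hK t ht
      · simp [ht]
    refine ne_top_of_le_ne_top ?_ (ENNReal.tsum_le_tsum h2)
    rw [ENNReal.tsum_mul_left]
    apply ENNReal.mul_ne_top (by simp)
    unfold auxW
    apply Summable.tsum_ofReal_ne_top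
    rw [Real.summable_nat_rpow]
    linarith

lemma aux_rho_nonempty (lam n : ℕ) (hlam : 0 < lam) (h : rho lam n ≠ 0) :
    n.primeFactors.Nonempty := by
  unfold rho at h
  have h1 := right_ne_zero_of_mul h
  obtain ⟨f, hf, -⟩ := Finset.exists_ne_zero_of_sum_ne_zero h1
  have h3 := (Finset.mem_filter.1 hf).2
  rw [← h3] at hlam
  obtain ⟨p, -, -⟩ := Finset.exists_ne_zero_of_sum_ne_zero hlam.ne'
  exact ⟨p, p.2⟩

lemma aux_dsum (s η : ℝ) (hs : s ≤ 1) (hη : 0 < η) : ∃ C : ENNReal, C ≠ ⊤ ∧ ∀ z : ℕ, 0 < z →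
    ∑' d : ℕ, (if d ∣ z then (d : ENNReal) * auxW s d else 0) ≤
      C * ENNReal.ofReal ((z : ℝ) ^ (1 - s + η)) := by
  obtain ⟨C, hC, h⟩ := aux_card_divisors_bound η hη
  refine ⟨ENNReal.ofReal C, ENNReal.ofReal_ne_top, fun z hz => ?_⟩
  have hz' : (0 : ℝ) < z := by exact_mod_cast hz
  rw [tsum_eq_sum (s := z.divisors) (fun d hd => by
    rw [if_neg]; intro hdz; exact hd (Nat.mem_divisors.2 ⟨hdz, hz.ne'⟩))]
  calc _ ≤ z.divisors.card • ENNReal.ofReal ((z : ℝ) ^ (1 - s)) := by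
        apply Finset.sum_le_card_nsmul
        intro d hd
        have hdz := Nat.dvd_of_mem_divisors hd
        have hd0 : 0 < d := Nat.pos_of_mem_divisors hd
        have hd0' : (0 : ℝ) < d := by exact_mod_cast hd0
        rw [if_pos hdz]
        unfold auxW
        rw [← ENNReal.ofReal_natCast d, ← ENNReal.ofReal_mul (by positivity)]
        apply ENNReal.ofReal_le_ofReal
        calc (d : ℝ) * (d : ℝ) ^ (-s) = (d : ℝ) ^ (1 - s) := by
              rw [sub_eq_add_neg, Real.rpow_add hd0', Real.rpow_one]
          _ ≤ _ := Real.rpow_le_rpow hd0'.le (by exact_mod_cast Nat.le_of_dvd hz hdz) (by linarith)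
    _ ≤ _ := by
        rw [nsmul_eq_mul, ← ENNReal.ofReal_natCast, ← ENNReal.ofReal_mul (by positivity),
          ← ENNReal.ofReal_mul hC.le]
        apply ENNReal.ofReal_le_ofReal
        rw [Real.rpow_add hz', mul_comm ((z : ℝ) ^ (1 - s)), ← mul_assoc]
        exact mul_le_mul_of_nonneg_right (h z hz.ne') (by positivity)

/-- Pointwise bound. -/
lemma aux_pointwise (lam : ℕ) (hlam : 0 < lam) (σ η : ℝ) (hη : 0 < η) :
    ∃ C : ℝ, 0 < C ∧ ∀ n z l : ℕ, n ≠ 0 → z ≠ 0 → l ≠ 0 → n ∣ l → z ∣ l →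
      (n : ℝ) ^ σ * (rho lam n / (l.totient : ℝ)) ≤
        C * ((n.gcd z : ℝ) * ((n : ℝ) ^ (-(1 - σ - 2 * η)) * (z : ℝ) ^ (-(1 - η)))) := by
  obtain ⟨C₁, hC₁, h1⟩ := aux_rho_bound lam hlam η hη
  obtain ⟨C₂, hC₂, h2⟩ := aux_totient_bound η hη
  refine ⟨C₁ * C₂ * C₂, by positivity, fun n z l hn hz hl hnl hzl => ?_⟩
  have hn0 : (0 : ℝ) < n := by exact_mod_cast Nat.pos_of_ne_zero hn
  have hg0 : 0 < n.gcd z := Nat.gcd_pos_of_pos_left _ (Nat.pos_of_ne_zero hn)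
  have htn : (0 : ℝ) < n.totient := by exact_mod_cast Nat.totient_pos.2 (Nat.pos_of_ne_zero hn)
  have htz : (0 : ℝ) < z.totient := by exact_mod_cast Nat.totient_pos.2 (Nat.pos_of_ne_zero hz)
  have htl : (0 : ℝ) < l.totient := by exact_mod_cast Nat.totient_pos.2 (Nat.pos_of_ne_zero hl)
  have hprod : n.totient * z.totient ≤ n.gcd z * l.totient := by
    have e1 := Nat.totient_gcd_mul_totient_mul n z
    have e2 := Nat.totient_gcd_mul_totient_mul (n.gcd z) (n.lcm z)
    rw [Nat.gcd_mul_lcm, Nat.gcd_eq_left ((Nat.gcd_dvd_left n z).trans (Nat.dvd_lcm_left n z))] at e2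
    have e3 : n.totient * z.totient = (n.gcd z).totient * (n.lcm z).totient := by
      apply Nat.eq_of_mul_eq_mul_right hg0
      rw [← e1, e2]
    rw [e3]
    exact Nat.mul_le_mul (Nat.totient_le _) (Nat.le_of_dvd (Nat.totient_pos.2 (Nat.pos_of_ne_zero hl))
      (Nat.totient_dvd_of_dvd (Nat.lcm_dvd hnl hzl)))
  have hprod' : (n.totient : ℝ) * z.totient ≤ n.gcd z * l.totient := by exact_mod_cast hprod
  have h3 : 1 / (l.totient : ℝ) ≤ (n.gcd z : ℝ) * ((1 / (n.totient : ℝ)) * (1 / (z.totient : ℝ))) := by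
    rw [div_le_iff₀ htl]
    have : (n.gcd z : ℝ) * ((1 / (n.totient : ℝ)) * (1 / (z.totient : ℝ))) * l.totient =
      (n.gcd z * l.totient) / (n.totient * z.totient) := by field_simp
    rw [this, le_div_iff₀ (by positivity), one_mul]
    exact hprod'
  calc (n : ℝ) ^ σ * (rho lam n / (l.totient : ℝ))
      = (n : ℝ) ^ σ * (rho lam n * (1 / (l.totient : ℝ))) := by rw [mul_one_div]
    _ ≤ (n : ℝ) ^ σ * ((C₁ * (n : ℝ) ^ η) * ((n.gcd z : ℝ) *
          ((C₂ * (n : ℝ) ^ (-(1 - η))) * (C₂ * (z : ℝ) ^ (-(1 - η)))))) := by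
        apply mul_le_mul_of_nonneg_left _ (by positivity)
        apply mul_le_mul (h1 n hn) _ (by positivity) (by positivity)
        refine h3.trans ?_
        apply mul_le_mul_of_nonneg_left _ (by positivity)
        exact mul_le_mul (h2 n hn) (h2 z hz) (by positivity) (by positivity)
    _ = C₁ * C₂ * C₂ * ((n.gcd z : ℝ) * (((n : ℝ) ^ σ * (n : ℝ) ^ η * (n : ℝ) ^ (-(1 - η))) *
          (z : ℝ) ^ (-(1 - η)))) := by ring
    _ = _ := by
        rw [← Real.rpow_add hn0, ← Real.rpow_add hn0]
        congr 5
        ring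

open Classical in
lemma aux_main (u : ℕ → ℤ) (z : ℕ → ℕ) (S : ℕ → Finset ℕ) (K : ℕ) (hz0 : ∀ p, 0 < z p)
    (hzc : ∀ p : ℕ, p.Prime → p.Coprime (z p))
    (hzd : ∀ p n : ℕ, p.Prime → p ∣ n → zu u n ≠ 0 → z p ∣ zu u n)
    (hS : ∀ p : ℕ, p.Prime → p ∈ S (z p)) (hK : ∀ t, 0 < t → (S t).card ≤ K * t)
    (lam : ℕ) (hlam : 0 < lam) (σ η : ℝ) (hσ : 0 ≤ σ) (hη : 0 < η)
    (hκ : (σ + 4 * η) * (1 + 3 * lam) < 1) :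
    ∑' n : ℕ, ENNReal.ofReal ((n : ℝ) ^ σ * (rho lam n / ((ellu u n).totient : ℝ))) ≠ ⊤ := by
  obtain ⟨j, rfl⟩ : ∃ j, lam = j + 1 := ⟨lam - 1, by omega⟩
  set κ : ℝ := σ + 4 * η with hκd
  set s : ℝ := 1 - σ - 2 * η with hsd
  have hκ0 : 0 ≤ κ := by positivity
  have hκl : 0 ≤ κ * (j + 1 : ℕ) := by positivity
  have hs0 : 0 < s := by rw [hsd]; linarith
  have hs1 : s ≤ 1 := by rw [hsd]; linarith
  obtain ⟨C₀, hC₀, hpt⟩ := aux_pointwise (j + 1) hlam σ η hη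
  obtain ⟨C₁, hC₁, hgeom⟩ := aux_geom s hs0
  obtain ⟨C₂, hC₂, hM⟩ := aux_Msum s κ hs0 hκ0 (by rw [hsd, hκd]; linarith)
  obtain ⟨C₃, hC₃, hd⟩ := aux_dsum s η hs1 hη
  have hP := aux_Psum z S K hz0 hS hK (j + 1) κ hκ0 hκ
  have hcov : ∑' n : ℕ, ENNReal.ofReal ((n : ℝ) ^ σ * (rho (j + 1) n / ((ellu u n).totient : ℝ))) ≤
      ∑' x : ℕ × ℕ × ℕ × ℕ, ENNReal.ofReal C₀ * ((if x.1.Prime then auxW (1 - η) (z x.1) else 0) *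
        (auxW s (x.1 ^ (x.2.1 + 1)) *
          ((if x.2.2.1 ∣ z x.1 then (x.2.2.1 : ENNReal) * auxW s x.2.2.1 else 0) *
            (if auxM j x.1 x.2.2.2 then auxW s x.2.2.2 else 0)))) := by
    apply aux_cover (fun x => x.1 ^ (x.2.1 + 1) * (x.2.2.1 * x.2.2.2))
    intro n hn
    have hrt : rho (j + 1) n ≠ 0 ∧ (ellu u n).totient ≠ 0 := by
      constructor
      · intro h; apply hn; simp [h]
      · intro h; apply hn; simp [h]
    obtain ⟨hr, ht⟩ := hrt
    have hne := aux_rho_nonempty _ n hlam hr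
    have hc := aux_rho_card _ n hr
    have hell : ellu u n ≠ 0 := by intro h; apply ht; simp [h]
    have hn0 : n ≠ 0 := by rintro rfl; simp at hne
    have hzn : zu u n ≠ 0 := by
      intro h; apply hell; unfold ellu; rw [h, Nat.lcm_zero_right]
    set P := n.primeFactors.max' hne with hPd
    have hPm : P ∈ n.primeFactors := Finset.max'_mem _ _
    have hPp := Nat.prime_of_mem_primeFactors hPm
    have hPn := Nat.dvd_of_mem_primeFactors hPm
    obtain ⟨k, m, e, hcop, hm0, hmc, hmP⟩ := aux_split j P n P hn0 hPm hc
      (fun q hq => Finset.le_max' _ _ hq)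
    have hg : n.gcd (z P) = m.gcd (z P) := by
      rw [← e]
      exact Nat.Coprime.gcd_mul_left_cancel m ((hzc P hPp).pow_left _)
    obtain ⟨m', hm'⟩ := Nat.gcd_dvd_left m (z P)
    have hm'd : m' ∣ m := ⟨_, by rw [mul_comm]; exact hm'⟩
    have hm'0 : m' ≠ 0 := by rintro rfl; exact hm0 (by simpa using hm')
    have hsub := Nat.primeFactors_mono hm'd hm0
    have hM' : auxM j P m' := ⟨hm'0, (Finset.card_le_card hsub).trans hmc,
      fun q hq => hmP q (hsub hq)⟩
    have e' : P ^ (k + 1) * (m.gcd (z P) * m') = n := by rw [← hm']; exact e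
    refine ⟨(P, k, m.gcd (z P), m'), e', ?_⟩
    rw [if_pos hPp, if_pos (Nat.gcd_dvd_right m (z P)), if_pos hM']
    have hb := hpt n (z P) (ellu u n) hn0 (hz0 P).ne' hell (Nat.dvd_lcm_left _ _)
      ((hzd P n hPp hPn hzn).trans (Nat.dvd_lcm_right _ _))
    refine (ENNReal.ofReal_le_ofReal hb).trans (le_of_eq ?_)
    rw [hg, ENNReal.ofReal_mul hC₀.le, ENNReal.ofReal_mul (by positivity),
      ENNReal.ofReal_mul (by positivity), ENNReal.ofReal_natCast]
    change _ * (_ * (auxW s n * auxW (1 - η) (z P))) = _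
    have e2 : auxW s n = auxW s (P ^ (k + 1)) * (auxW s (m.gcd (z P)) * auxW s m') := by
      rw [← auxW_mul, ← auxW_mul, e']
    rw [e2]
    ring
  refine ne_top_of_le_ne_top ?_ hcov
  rw [ENNReal.tsum_mul_left]
  apply ENNReal.mul_ne_top ENNReal.ofReal_ne_top
  rw [ENNReal.tsum_prod']
  have hstep : ∀ p : ℕ, ∑' y : ℕ × ℕ × ℕ, ((if p.Prime then auxW (1 - η) (z p) else 0) *
        (auxW s (p ^ (y.1 + 1)) *
          ((if y.2.1 ∣ z p then (y.2.1 : ENNReal) * auxW s y.2.1 else 0) *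
            (if auxM j p y.2.2 then auxW s y.2.2 else 0)))) ≤
      (C₁ * C₃ * C₂ ^ j) *
        (if p.Prime then auxW (1 - κ * (j + 1 : ℕ)) p * auxW (1 - κ) (z p) else 0) := by
    intro p
    by_cases hp : p.Prime
    · rw [if_pos hp, if_pos hp, ENNReal.tsum_mul_left, ENNReal.tsum_prod']
      simp only [ENNReal.tsum_mul_left]
      rw [ENNReal.tsum_mul_right, ENNReal.tsum_prod']
      simp only [ENNReal.tsum_mul_left]
      rw [ENNReal.tsum_mul_right]
      have hp0 : (0 : ℝ) < p := by exact_mod_cast hp.pos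
      have hp1 : (1 : ℝ) ≤ p := by exact_mod_cast hp.one_le
      have hzp : (0 : ℝ) < z p := by exact_mod_cast hz0 p
      calc _ ≤ auxW (1 - η) (z p) * ((C₁ * auxW s p) *
            ((C₃ * ENNReal.ofReal ((z p : ℝ) ^ (1 - s + η))) *
              (C₂ * ENNReal.ofReal ((p : ℝ) ^ κ)) ^ j)) := by
            gcongr
            · exact hgeom p hp.two_le
            · exact hd _ (hz0 p)
            · exact hM p hp.one_le j
        _ = (C₁ * C₃ * C₂ ^ j) * ((auxW s p * ENNReal.ofReal ((p : ℝ) ^ κ) ^ j) *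
              (auxW (1 - η) (z p) * ENNReal.ofReal ((z p : ℝ) ^ (1 - s + η)))) := by
            rw [mul_pow]; ring
        _ ≤ _ := by
            gcongr
            · unfold auxW
              rw [← ENNReal.ofReal_pow (by positivity), ← ENNReal.ofReal_mul (by positivity)]
              apply ENNReal.ofReal_le_ofReal
              rw [← Real.rpow_natCast, ← Real.rpow_mul hp0.le, ← Real.rpow_add hp0]
              apply Real.rpow_le_rpow_of_exponent_le hp1
              push_cast
              rw [hsd, hκd]
              linarith
            · unfold auxW
              rw [← ENNReal.ofReal_mul (by positivity)]
              apply ENNReal.ofReal_le_ofReal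
              rw [← Real.rpow_add hzp]
              apply le_of_eq
              congr 1
              rw [hsd, hκd]
              ring
    · simp [hp]
  refine ne_top_of_le_ne_top ?_ (ENNReal.tsum_le_tsum hstep)
  rw [ENNReal.tsum_mul_left]
  exact ENNReal.mul_ne_top (by finiteness) hP

/-- For every positive integer `λ` and `ε ∈ (0, 1/5]` there are `C, y₀ > 0`
such that for all `y ≥ y₀`,
`Σ_{n ≥ y, (n,a₂)=1} ρ_λ(n)/φ(ℓ(n)) ≤ C·(log log y)/y^{1/(1+3λ)−ε}`. -/
theorem statement2 (a₁ a₂ : ℤ) (hcop : IsCoprime a₁ a₂) (ha₂ : a₂ ≠ 0)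
    (hΔ : a₁ ^ 2 + 4 * a₂ ≠ 0)
    (u : ℕ → ℤ) (hu0 : u 0 = 0) (hu1 : u 1 = 1)
    (hrec : ∀ n : ℕ, u (n + 2) = a₁ * u (n + 1) + a₂ * u n)
    (hnd : ∀ α β : ℂ, α ^ 2 = (a₁ : ℂ) * α + (a₂ : ℂ) →
      β ^ 2 = (a₁ : ℂ) * β + (a₂ : ℂ) → α ≠ β → ∀ k : ℕ, 0 < k → (α / β) ^ k ≠ 1)
    (lam : ℕ) (hlam : 0 < lam) (ε : ℝ) (hε₀ : 0 < ε) (hε₁ : ε ≤ 1 / 5) :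
    ∃ C y₀ : ℝ, 0 < C ∧ 0 < y₀ ∧ ∀ y : ℝ, y₀ ≤ y →
      Summable (fun n : ℕ =>
        if 0 < n ∧ y ≤ (n : ℝ) ∧ Int.gcd (n : ℤ) a₂ = 1 then
          rho lam n / (Nat.totient (ellu u n) : ℝ) else 0) ∧
      (∑' n : ℕ, if 0 < n ∧ y ≤ (n : ℝ) ∧ Int.gcd (n : ℤ) a₂ = 1 then
          rho lam n / (Nat.totient (ellu u n) : ℝ) else 0) ≤
        C * Real.log (Real.log y) / y ^ (1 / (1 + 3 * (lam : ℝ)) - ε) := by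
  classical
  obtain ⟨z, S, K, hz0, hzc, hzd, hS, hK⟩ :=
    aux_rank_fun a₁ a₂ ha₂ hΔ u hu0 hu1 hrec hnd
  set θ : ℝ := 1 / (1 + 3 * (lam : ℝ)) with hθ
  have hden : (0 : ℝ) < 1 + 3 * (lam : ℝ) := by positivity
  have hθ0 : 0 < θ := by positivity
  obtain ⟨σ, hσ0, hσθ, hσε⟩ : ∃ σ : ℝ, 0 ≤ σ ∧ σ < θ ∧ θ - ε ≤ σ :=
    ⟨max (θ - ε) 0, le_max_right _ _, max_lt (by linarith) hθ0, le_max_left _ _⟩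
  have hη0 : 0 < (θ - σ) / 8 := by linarith
  have hκ : (σ + 4 * ((θ - σ) / 8)) * (1 + 3 * (lam : ℝ)) < 1 := by
    calc _ < θ * (1 + 3 * (lam : ℝ)) := mul_lt_mul_of_pos_right (by linarith) hden
      _ = 1 := by rw [hθ]; field_simp
  have hmain := aux_main u z S K hz0 hzc hzd hS hK lam hlam σ _ hσ0 hη0 hκ
  set G : ℕ → ℝ := fun n => (n : ℝ) ^ σ * (rho lam n / ((ellu u n).totient : ℝ)) with hG
  have hG0 : ∀ n, 0 ≤ G n := fun n => by
    have := aux_rho_nonneg lam n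
    simp only [hG]; positivity
  have hsum : Summable G := by
    have h := ENNReal.summable_toReal hmain
    refine h.congr fun n => ?_
    exact ENNReal.toReal_ofReal (hG0 n)
  refine ⟨(∑' n, G n) + 1, Real.exp (Real.exp 1), ?_, Real.exp_pos _, ?_⟩
  · have : 0 ≤ ∑' n, G n := tsum_nonneg hG0
    linarith
  intro y hy
  have hy1 : (1 : ℝ) ≤ y := le_trans (Real.one_le_exp (Real.exp_pos _).le) hy
  have hy0 : (0 : ℝ) < y := by linarith
  have hll : 1 ≤ Real.log (Real.log y) := by
    have h1 : Real.exp 1 ≤ Real.log y := (Real.le_log_iff_exp_le hy0).2 hy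
    exact (Real.le_log_iff_exp_le (lt_of_lt_of_le (Real.exp_pos _) h1)).2 h1
  have hle : ∀ n : ℕ, (if 0 < n ∧ y ≤ (n : ℝ) ∧ Int.gcd (n : ℤ) a₂ = 1 then
          rho lam n / (Nat.totient (ellu u n) : ℝ) else 0) ≤ y ^ (-σ) * G n := by
    intro n
    have hGn := hG0 n
    split_ifs with h
    · have hn0 : (0 : ℝ) < n := by exact_mod_cast h.1
      have hq : 0 ≤ rho lam n / (Nat.totient (ellu u n) : ℝ) := by
        have := aux_rho_nonneg lam n
        positivity
      have h1 : 1 ≤ y ^ (-σ) * (n : ℝ) ^ σ := by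
        rw [Real.rpow_neg hy0.le, inv_mul_eq_div, one_le_div (by positivity)]
        exact Real.rpow_le_rpow hy0.le h.2.1 hσ0
      simp only [hG]
      rw [← mul_assoc]
      exact le_mul_of_one_le_left hq h1
    · positivity
  have hnn : ∀ n : ℕ, 0 ≤ (if 0 < n ∧ y ≤ (n : ℝ) ∧ Int.gcd (n : ℤ) a₂ = 1 then
          rho lam n / (Nat.totient (ellu u n) : ℝ) else 0) := by
    intro n
    have := aux_rho_nonneg lam n
    split_ifs <;> positivity
  have hs2 := hsum.mul_left (y ^ (-σ))
  have hs1 := Summable.of_nonneg_of_le hnn hle hs2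
  refine ⟨hs1, ?_⟩
  refine (hs1.tsum_le_tsum hle hs2).trans ?_
  rw [tsum_mul_left, div_eq_mul_inv, ← Real.rpow_neg hy0.le, mul_comm]
  have hT : 0 ≤ ∑' n, G n := tsum_nonneg hG0
  apply mul_le_mul _ _ (by positivity) (by positivity)
  · nlinarith
  · exact Real.rpow_le_rpow_of_exponent_le hy1 (by linarith)
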